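/- arXiv:1812.06369 — 3 statements merged into one kernel-verified Lean document; each statement's English description precedes it below -/
import Mathlib

section
/- Let 𝒳 be a finite set, P_X a probability distribution on 𝒳, P_F a probability distribution on the set of functions from 𝒳 to {0,1}, and m a positive integer. Let (X,F) ~ P_X × P_F and W = g(X, F(X)) for a function g : 𝒳 × {0,1} → [m]. Then Σ_{i∈[m]} Σ_f (P[W=i, F=f] − P[W=i]·P[F=f])² ≤ (max_f P_F(f)) · √(Pred(P_X, P_F)), where the sum over f ranges over all functions from 𝒳 to {0,1}. -/
/-!
Write `s_f(x) = (-1)^{f(x)}`, and let `a_i(f)` be the conditional probability that `W = i` given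
`F = f`. The left-hand side is `∑_i ∑_f PF(f)² (a_i(f) - E a_i(F))²`, which is at most `max PF`
times `∑_i Var(a_i(F))`.

Splitting the indicator of `g (x, b) = i` into its even and odd parts in `b` gives
`a_i(f) = c_i + E_X[d_i(X) s_f(X)]` with `c_i` independent of `f`, so
`Var(a_i(F)) ≤ E_F (E_X[d_i(X) s_F(X)])²`. Expanding the square and summing over `i` yields
`E_{X,X'}[K(X,X') C(X,X')]`, where `K(x,x') = ∑_i d_i(x) d_i(x')` satisfies `|K| ≤ 1` and
`C(x,x') = E_F[s_F(x) s_F(x')]`. By Jensen this is at most `√(E C²)`, and exchanging the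
expectations over `(X,X')` and `(F,F')` shows `E C² = Pred` (`crossPred_eq`).
-/

open Finset

/-- The cross-predictability of a distribution `PF` on Boolean-valued functions with respect
to an input distribution `PX`: `E_{F,F'} (E_X (-1)^{F(X)+F'(X)})^2`. -/
noncomputable def crossPred {𝒳 : Type*} [Fintype 𝒳] [DecidableEq 𝒳]
    (PX : 𝒳 → ℝ) (PF : (𝒳 → Bool) → ℝ) : ℝ :=
  ∑ f : 𝒳 → Bool, ∑ f' : 𝒳 → Bool, PF f * PF f' *
    (∑ x : 𝒳, PX x * (if f x = f' x then (1 : ℝ) else -1)) ^ 2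

/-- The sign `(-1)^b`. -/
def bsign (b : Bool) : ℝ := if b then -1 else 1

/-- The odd part in `b` of the indicator of `g (x, b) = i`. -/
noncomputable def oddPart {𝒳 : Type*} {m : ℕ} (g : 𝒳 × Bool → Fin m) (i : Fin m) (x : 𝒳) : ℝ :=
  ((if g (x, false) = i then (1 : ℝ) else 0) - (if g (x, true) = i then (1 : ℝ) else 0)) / 2

/-- The even part in `b` of the indicator of `g (x, b) = i`. -/
noncomputable def evenPart {𝒳 : Type*} {m : ℕ} (g : 𝒳 × Bool → Fin m) (i : Fin m) (x : 𝒳) : ℝ :=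
  ((if g (x, false) = i then (1 : ℝ) else 0) + (if g (x, true) = i then (1 : ℝ) else 0)) / 2

/-- The correlation `E_F[(-1)^{F(x)} (-1)^{F(y)}]`. -/
noncomputable def signCorr {𝒳 : Type*} [Fintype 𝒳] [DecidableEq 𝒳]
    (PF : (𝒳 → Bool) → ℝ) (x y : 𝒳) : ℝ :=
  ∑ f : 𝒳 → Bool, PF f * (bsign (f x) * bsign (f y))

lemma indicator_eq {𝒳 : Type*} {m : ℕ} (g : 𝒳 × Bool → Fin m) (i : Fin m) (x : 𝒳) (b : Bool) :
    (if g (x, b) = i then (1 : ℝ) else 0) = evenPart g i x + oddPart g i x * bsign b := by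
  cases b <;> simp [evenPart, oddPart, bsign] <;> ring

lemma abs_sum_oddPart_mul_le {𝒳 : Type*} {m : ℕ} (g : 𝒳 × Bool → Fin m) (x y : 𝒳) :
    |∑ i, oddPart g i x * oddPart g i y| ≤ 1 := by
  have h : ∑ i, oddPart g i x * oddPart g i y =
      ((if g (y, false) = g (x, false) then (1 : ℝ) else 0)
        - (if g (y, true) = g (x, false) then (1 : ℝ) else 0)
        - (if g (y, false) = g (x, true) then (1 : ℝ) else 0)
        + (if g (y, true) = g (x, true) then (1 : ℝ) else 0)) / 4 := by
    have h1 : ∀ i, oddPart g i x * oddPart g i y =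
        ((if g (x, false) = i then (if g (y, false) = i then (1 : ℝ) else 0) else 0)
        - (if g (x, false) = i then (if g (y, true) = i then (1 : ℝ) else 0) else 0)
        - (if g (x, true) = i then (if g (y, false) = i then (1 : ℝ) else 0) else 0)
        + (if g (x, true) = i then (if g (y, true) = i then (1 : ℝ) else 0) else 0)) / 4 := by
      intro i
      unfold oddPart
      split_ifs <;> norm_num
    simp only [h1, ← Finset.sum_div, Finset.sum_add_distrib, Finset.sum_sub_distrib,
      Finset.sum_ite_eq, Finset.mem_univ, if_true]
  rw [h, abs_le]
  constructor <;> split_ifs <;> norm_num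

/-- The mean minimises the second moment about a point. -/
lemma variance_le {ι : Type*} [Fintype ι] (p a : ι → ℝ) (hp : ∑ j, p j = 1) (c : ℝ) :
    ∑ j, p j * (a j - ∑ k, p k * a k) ^ 2 ≤ ∑ j, p j * (a j - c) ^ 2 := by
  have key : ∀ t : ℝ, ∑ j, p j * (a j - t) ^ 2 =
      ∑ j, p j * a j ^ 2 - 2 * t * ∑ j, p j * a j + t ^ 2 := by
    intro t
    have : t ^ 2 = t ^ 2 * ∑ j, p j := by rw [hp, mul_one]
    rw [this, Finset.mul_sum, Finset.mul_sum, ← Finset.sum_sub_distrib, ← Finset.sum_add_distrib]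
    exact Finset.sum_congr rfl fun j _ => by ring
  rw [key, key]
  nlinarith [sq_nonneg (∑ k, p k * a k - c)]

/-- The second moment of a weighted sum, expanded as a quadratic form. -/
lemma sum_mul_sq_expand {ι κ : Type*} [Fintype ι] [Fintype κ] (p : ι → ℝ) (q : κ → ℝ)
    (s : ι → κ → ℝ) :
    ∑ j, p j * (∑ x, q x * s j x) ^ 2 =
      ∑ x, ∑ y, q x * q y * ∑ j, p j * (s j x * s j y) := by
  simp only [sq, Finset.sum_mul_sum]
  simp only [Finset.mul_sum]
  rw [Finset.sum_comm]
  refine Finset.sum_congr rfl fun x _ => ?_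
  rw [Finset.sum_comm]
  exact Finset.sum_congr rfl fun y _ => Finset.sum_congr rfl fun j _ => by ring

lemma crossPred_eq {𝒳 : Type*} [Fintype 𝒳] [DecidableEq 𝒳]
    (PX : 𝒳 → ℝ) (PF : (𝒳 → Bool) → ℝ) :
    crossPred PX PF = ∑ x, ∑ y, PX x * PX y * signCorr PF x y ^ 2 := by
  have hs : ∀ b b' : Bool, (if b = b' then (1 : ℝ) else -1) = bsign b * bsign b' := by
    intro b b'; cases b <;> cases b' <;> simp [bsign]
  have h1 := sum_mul_sq_expand (fun z : (𝒳 → Bool) × (𝒳 → Bool) => PF z.1 * PF z.2) PX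
    (fun z x => bsign (z.1 x) * bsign (z.2 x))
  rw [Fintype.sum_prod_type] at h1
  simp only [crossPred, hs]
  rw [h1]
  refine Finset.sum_congr rfl fun x _ => Finset.sum_congr rfl fun y _ => ?_
  rw [Fintype.sum_prod_type, sq, signCorr, Finset.sum_mul_sum]
  congr 1
  exact Finset.sum_congr rfl fun f _ => Finset.sum_congr rfl fun f' _ => by ring

lemma sum_signCorr_le {𝒳 : Type*} [Fintype 𝒳] [DecidableEq 𝒳]
    (PX : 𝒳 → ℝ) (hPX0 : ∀ x, 0 ≤ PX x) (hPX1 : ∑ x : 𝒳, PX x = 1)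
    (PF : (𝒳 → Bool) → ℝ) (K : 𝒳 → 𝒳 → ℝ) (hK : ∀ x y, |K x y| ≤ 1) :
    ∑ x, ∑ y, PX x * PX y * (K x y * signCorr PF x y) ≤ Real.sqrt (crossPred PX PF) := by
  have h1 : ∑ x, ∑ y, PX x * PX y * (K x y * signCorr PF x y) ≤
      ∑ x, ∑ y, PX x * PX y * |signCorr PF x y| := by
    refine Finset.sum_le_sum fun x _ => Finset.sum_le_sum fun y _ => ?_
    refine mul_le_mul_of_nonneg_left ?_ (mul_nonneg (hPX0 x) (hPX0 y))
    refine (le_abs_self _).trans ?_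
    rw [abs_mul]
    exact mul_le_of_le_one_left (abs_nonneg _) (hK x y)
  refine h1.trans (Real.le_sqrt_of_sq_le ?_)
  have h2 := Real.pow_arith_mean_le_arith_mean_pow (Finset.univ : Finset (𝒳 × 𝒳))
    (fun z => PX z.1 * PX z.2) (fun z => |signCorr PF z.1 z.2|)
    (fun z _ => mul_nonneg (hPX0 _) (hPX0 _))
    (by rw [Fintype.sum_prod_type, ← Finset.sum_mul_sum, hPX1, mul_one])
    (fun z _ => abs_nonneg _) 2
  simp only [Fintype.sum_prod_type, sq_abs] at h2
  rw [crossPred_eq]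
  exact h2

theorem stmt2 {𝒳 : Type*} [Fintype 𝒳] [DecidableEq 𝒳]
    (PX : 𝒳 → ℝ) (hPX0 : ∀ x, 0 ≤ PX x) (hPX1 : ∑ x : 𝒳, PX x = 1)
    (PF : (𝒳 → Bool) → ℝ) (hPF0 : ∀ f, 0 ≤ PF f) (hPF1 : ∑ f : 𝒳 → Bool, PF f = 1)
    (m : ℕ) (hm : 0 < m) (g : 𝒳 × Bool → Fin m) :
    -- Σ_i Σ_f (P[W=i, F=f] − P[W=i]·P[F=f])² ≤ (max_f P_F(f)) · √(Pred(P_X,P_F))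
    ∑ i : Fin m, ∑ f : 𝒳 → Bool,
        (PF f * (∑ x : 𝒳, PX x * (if g (x, f x) = i then (1 : ℝ) else 0)) -
          (∑ f' : 𝒳 → Bool, PF f' *
              ∑ x : 𝒳, PX x * (if g (x, f' x) = i then (1 : ℝ) else 0)) * PF f) ^ 2 ≤
      (⨆ f : 𝒳 → Bool, PF f) * Real.sqrt (crossPred PX PF) := by
  set M := ⨆ f : 𝒳 → Bool, PF f with hM
  have hle : ∀ f, PF f ≤ M := fun f => le_ciSup (Set.finite_range PF).bddAbove f
  have hM0 : 0 ≤ M := (hPF0 fun _ => false).trans (hle _)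
  have hrow : ∀ i : Fin m, ∑ f : 𝒳 → Bool,
        (PF f * (∑ x : 𝒳, PX x * (if g (x, f x) = i then (1 : ℝ) else 0)) -
          (∑ f' : 𝒳 → Bool, PF f' *
              ∑ x : 𝒳, PX x * (if g (x, f' x) = i then (1 : ℝ) else 0)) * PF f) ^ 2 ≤
      M * ∑ x, ∑ y, PX x * PX y * (oddPart g i x * oddPart g i y * signCorr PF x y) := by
    intro i
    set a : (𝒳 → Bool) → ℝ :=
      fun f => ∑ x : 𝒳, PX x * (if g (x, f x) = i then (1 : ℝ) else 0) with ha
    have hodd : ∀ f, a f - ∑ x, PX x * evenPart g i x =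
        ∑ x, PX x * (oddPart g i x * bsign (f x)) := by
      intro f
      simp only [ha, indicator_eq, mul_add, Finset.sum_add_distrib]
      ring
    have hvar := variance_le PF a hPF1 (∑ x, PX x * evenPart g i x)
    simp only [hodd] at hvar
    rw [sum_mul_sq_expand PF PX (fun f x => oddPart g i x * bsign (f x))] at hvar
    calc ∑ f, (PF f * a f - (∑ f', PF f' * a f') * PF f) ^ 2
        ≤ ∑ f, M * (PF f * (a f - ∑ f', PF f' * a f') ^ 2) := by
          refine Finset.sum_le_sum fun f _ => ?_
          have := mul_le_mul_of_nonneg_right (hle f)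
            (mul_nonneg (hPF0 f) (sq_nonneg (a f - ∑ f', PF f' * a f')))
          linarith
      _ = M * ∑ f, PF f * (a f - ∑ f', PF f' * a f') ^ 2 := by rw [Finset.mul_sum]
      _ ≤ _ := by
          refine mul_le_mul_of_nonneg_left (hvar.trans_eq ?_) hM0
          refine Finset.sum_congr rfl fun x _ => Finset.sum_congr rfl fun y _ => ?_
          rw [signCorr, Finset.mul_sum, Finset.mul_sum, Finset.mul_sum]
          exact Finset.sum_congr rfl fun f _ => by ring
  refine (Finset.sum_le_sum fun i _ => hrow i).trans ?_
  rw [← Finset.mul_sum]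
  refine mul_le_mul_of_nonneg_left (le_of_eq_of_le ?_ (sum_signCorr_le PX hPX0 hPX1 PF
    (fun x y => ∑ i, oddPart g i x * oddPart g i y) (abs_sum_oddPart_mul_le g))) hM0
  rw [Finset.sum_comm]
  refine Finset.sum_congr rfl fun x _ => ?_
  rw [Finset.sum_comm]
  refine Finset.sum_congr rfl fun y _ => ?_
  rw [Finset.sum_mul, Finset.mul_sum]
end

section
/- There is a universal constant C with the following property. Let n > 0, let 𝒲 be a finite set, let A be a sequential learning algorithm on ({0,1}^{n+1}, 𝒲), let P_X be the uniform distribution on {0,1}^n, and let P_F be a probability distribution on functions from {0,1}^n to {0,1}. Set q = Pred(P_X, P_F)^{1/24}. Let ⋆ be the law of (X, F(X)) when X ~ P_X and F ~ P_F independently, and for each function f let ρ_f be the law of (X, f(X)) when X ~ P_X. Suppose |𝒲| ≤ 1/q and m is a positive integer with m < 1/q. For a distribution D on {0,1}^{n+1}, let W^m(D) = (W_1,…,W_m) be the outputs of the m-trace of A for D. Then Σ_{w^m ∈ 𝒲^m} | P[W^m(⋆) = w^m] − E_{F~P_F} P[W^m(ρ_F) = w^m] | ≤ C·q. -/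
/-!
For a set `S` of labelled points, `ρ_f(S)` is a constant plus half the correlation `⟨χ_f, g⟩`
of the sign function `χ_f = (-1)^f` with some `g` bounded by one. The second moment of
`⟨χ_F, g⟩` is the quadratic form at `g` of the matrix `E_F χ_F χ_Fᵀ`, whose squared
Hilbert-Schmidt norm is exactly the cross-predictability `p`; hence
`(E_F |⟨χ_F, g⟩|)^4 ≤ p` (`corr_pow_four_le`), and one step of the algorithm distinguishes `⋆`
from `ρ_F` by at most `p^(1/4) = q^6` per output value, on average over `F` (`step_bound`).

The probability of an output sequence is a product of one-step probabilities. In a hybrid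
argument where the steps before the current one are taken under `⋆`, which does not depend on
`F`, and the later ones under `ρ_F`, whose one-step probabilities sum to one, each of the `m`
steps costs at most `|𝒲| q^6` (`trace_bound`). The total `m |𝒲| q^6` is at most `q^4 ≤ q`.
-/

open Finset

/-- `traceProb A D m w` is the probability that the output sequence `(W_1, …, W_m)` of the
`m`-trace of the sequential learning algorithm `A` for the distribution `D` on
`{0,1}^n × {0,1}` equals `w`.  Here `A t z prev` is the output of the algorithm at step `t+1`
upon seeing the sample `z` given the previous outputs `prev`. -/
noncomputable def traceProb {n : ℕ} {𝒲 : Type} [Fintype 𝒲] [DecidableEq 𝒲]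
    (A : (t : ℕ) → ((Fin n → Bool) × Bool) → (Fin t → 𝒲) → 𝒲)
    (D : (Fin n → Bool) × Bool → ℝ) (m : ℕ) (w : Fin m → 𝒲) : ℝ :=
  ∑ z : Fin m → (Fin n → Bool) × Bool,
    (∏ t : Fin m, D (z t)) *
      (if ∀ t : Fin m,
          A t.val (z t) (fun j : Fin t.val => w (Fin.castLE t.isLt.le j)) = w t
        then (1 : ℝ) else 0)

/-! ### Correlations and cross-predictability -/

/-- The sign function `(-1)^f`. -/
noncomputable def chi {X : Type*} (f : X → Bool) (x : X) : ℝ := if f x then -1 else 1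

lemma ite_eq_chi_mul {X : Type*} (f f' : X → Bool) (x : X) :
    (if f x = f' x then (1 : ℝ) else -1) = chi f x * chi f' x := by
  unfold chi
  cases f x <;> cases f' x <;> simp

/-- The cross-predictability as the squared weighted Hilbert-Schmidt norm of the matrix
`E_F χ_F χ_Fᵀ`. -/
lemma crossPred_eq_s5 {X : Type*} [Fintype X] [DecidableEq X]
    (u : X → ℝ) (PF : (X → Bool) → ℝ) :
    crossPred u PF =
      ∑ z : X × X, u z.1 * u z.2 * (∑ f, PF f * (chi f z.1 * chi f z.2)) ^ 2 := by
  unfold crossPred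
  simp_rw [ite_eq_chi_mul, sq, Finset.sum_mul_sum, Fintype.sum_prod_type, Finset.mul_sum]
  rw [Finset.sum_congr rfl (fun f _ => Finset.sum_comm), Finset.sum_comm]
  refine Finset.sum_congr rfl fun x _ => ?_
  rw [Finset.sum_congr rfl (fun f _ => Finset.sum_comm), Finset.sum_comm]
  refine Finset.sum_congr rfl fun y _ => ?_
  refine Finset.sum_congr rfl fun f _ => Finset.sum_congr rfl fun f' _ => ?_
  ring

lemma second_moment_eq {X : Type*} [Fintype X] [DecidableEq X]
    (u : X → ℝ) (PF : (X → Bool) → ℝ) (g : X → ℝ) :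
    ∑ f, PF f * (∑ x, u x * (chi f x * g x)) ^ 2 =
      ∑ z : X × X, u z.1 * u z.2 * ((g z.1 * g z.2) *
        (∑ f, PF f * (chi f z.1 * chi f z.2))) := by
  simp_rw [sq, Finset.sum_mul_sum, Fintype.sum_prod_type, Finset.mul_sum]
  rw [Finset.sum_comm]
  refine Finset.sum_congr rfl fun x _ => ?_
  rw [Finset.sum_comm]
  refine Finset.sum_congr rfl fun y _ => ?_
  refine Finset.sum_congr rfl fun f _ => ?_
  ring

/-- Jensen's inequality for the square, with finitely supported weights. -/
lemma weighted_sq_le {ι : Type*} [Fintype ι] (p L : ι → ℝ) (hp : ∀ i, 0 ≤ p i)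
    (h1 : ∑ i, p i = 1) : (∑ i, p i * L i) ^ 2 ≤ ∑ i, p i * L i ^ 2 := by
  simpa using (Even.convexOn_pow even_two).map_sum_le (t := Finset.univ) (w := p) (p := L)
    (fun i _ => hp i) h1 (fun i _ => Set.mem_univ _)

/-- Jensen twice: first over the random function, then over pairs of inputs, where the second
moment is an average of entries of `E_F χ_F χ_Fᵀ` against the bounded weights `g x * g y`. -/
lemma corr_pow_four_le {X : Type*} [Fintype X] [DecidableEq X]
    (u : X → ℝ) (hu : ∀ x, 0 ≤ u x) (hu1 : ∑ x, u x = 1)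
    (PF : (X → Bool) → ℝ) (hP : ∀ f, 0 ≤ PF f) (hP1 : ∑ f, PF f = 1)
    (g : X → ℝ) (hg : ∀ x, |g x| ≤ 1) :
    (∑ f, PF f * |∑ x, u x * (chi f x * g x)|) ^ 4 ≤ crossPred u PF := by
  have h1 := weighted_sq_le PF (fun f => |∑ x, u x * (chi f x * g x)|) hP hP1
  simp only [sq_abs] at h1
  rw [second_moment_eq] at h1
  have hw : ∑ z : X × X, u z.1 * u z.2 = 1 := by
    rw [Fintype.sum_prod_type, ← Finset.sum_mul_sum, hu1, one_mul]
  have h2 := weighted_sq_le (fun z : X × X => u z.1 * u z.2)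
    (fun z => (g z.1 * g z.2) * (∑ f, PF f * (chi f z.1 * chi f z.2)))
    (fun z => mul_nonneg (hu _) (hu _)) hw
  have h3 : ∑ z : X × X, u z.1 * u z.2 * ((g z.1 * g z.2) *
        (∑ f, PF f * (chi f z.1 * chi f z.2))) ^ 2 ≤ crossPred u PF := by
    rw [crossPred_eq_s5]
    refine Finset.sum_le_sum fun z _ => ?_
    refine mul_le_mul_of_nonneg_left ?_ (mul_nonneg (hu _) (hu _))
    rw [mul_pow]
    have : (g z.1 * g z.2) ^ 2 ≤ 1 := by
      rw [sq_le_one_iff_abs_le_one, abs_mul]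
      exact mul_le_one₀ (hg _) (abs_nonneg _) (hg _)
    exact mul_le_of_le_one_left (sq_nonneg _) this
  calc _ = ((∑ f, PF f * |∑ x, u x * (chi f x * g x)|) ^ 2) ^ 2 := by ring
    _ ≤ _ := pow_le_pow_left₀ (sq_nonneg _) h1 2
    _ ≤ _ := h2.trans h3

lemma abs_sub_mean_le {ι : Type*} [Fintype ι] (p h : ι → ℝ) (hp : ∀ i, 0 ≤ p i)
    (h1 : ∑ i, p i = 1) (c : ℝ) :
    |c - ∑ j, p j * h j| ≤ ∑ i, p i * |c - h i| := by
  have : c - ∑ j, p j * h j = ∑ j, p j * (c - h j) := by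
    simp_rw [mul_sub, Finset.sum_sub_distrib, ← Finset.sum_mul, h1, one_mul]
  rw [this]
  refine (Finset.abs_sum_le_sum_abs _ _).trans (le_of_eq ?_)
  exact Finset.sum_congr rfl fun i _ => by rw [abs_mul, abs_of_nonneg (hp i)]

/-- The mean absolute deviation from the mean is at most twice that from any constant `c`. -/
lemma mean_dev_le {ι : Type*} [Fintype ι] (p h : ι → ℝ) (hp : ∀ i, 0 ≤ p i)
    (h1 : ∑ i, p i = 1) (c : ℝ) :
    ∑ i, p i * |(∑ j, p j * h j) - h i| ≤ 2 * ∑ i, p i * |h i - c| := by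
  have hc : |(∑ j, p j * h j) - c| ≤ ∑ i, p i * |h i - c| := by
    rw [abs_sub_comm]
    simp_rw [abs_sub_comm _ c]
    exact abs_sub_mean_le p h hp h1 c
  calc _ ≤ ∑ i, (p i * |(∑ j, p j * h j) - c| + p i * |h i - c|) := by
        refine Finset.sum_le_sum fun i _ => ?_
        rw [← mul_add]
        refine mul_le_mul_of_nonneg_left ?_ (hp i)
        rw [abs_sub_comm (h i) c]
        exact abs_sub_le _ _ _
    _ = |(∑ j, p j * h j) - c| + ∑ i, p i * |h i - c| := by
        rw [Finset.sum_add_distrib, ← Finset.sum_mul, h1, one_mul]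
    _ ≤ _ := by linarith

/-! ### Traces and the hybrid argument -/

section Trace

variable {n : ℕ} {𝒲 : Type} [Fintype 𝒲] [DecidableEq 𝒲]

/-- The probability, under the sample law `D`, that step `t + 1` outputs `v` after the previous
outputs `w`. -/
noncomputable def stepProb (A : (t : ℕ) → ((Fin n → Bool) × Bool) → (Fin t → 𝒲) → 𝒲)
    (D : (Fin n → Bool) × Bool → ℝ) (t : ℕ) (w : Fin t → 𝒲) (v : 𝒲) : ℝ :=
  ∑ z, D z * (if A t z w = v then (1 : ℝ) else 0)

lemma sum_stepProb (A : (t : ℕ) → ((Fin n → Bool) × Bool) → (Fin t → 𝒲) → 𝒲)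
    (D : (Fin n → Bool) × Bool → ℝ) (t : ℕ) (w : Fin t → 𝒲) :
    ∑ v, stepProb A D t w v = ∑ z, D z := by
  unfold stepProb
  rw [Finset.sum_comm]
  simp

lemma stepProb_nonneg (A : (t : ℕ) → ((Fin n → Bool) × Bool) → (Fin t → 𝒲) → 𝒲)
    (D : (Fin n → Bool) × Bool → ℝ) (hD : ∀ z, 0 ≤ D z) (t : ℕ) (w : Fin t → 𝒲) (v : 𝒲) :
    0 ≤ stepProb A D t w v :=
  Finset.sum_nonneg fun z _ => mul_nonneg (hD z) (by split_ifs <;> norm_num)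

lemma traceProb_eq_prod (A : (t : ℕ) → ((Fin n → Bool) × Bool) → (Fin t → 𝒲) → 𝒲)
    (D : (Fin n → Bool) × Bool → ℝ) (m : ℕ) (w : Fin m → 𝒲) :
    traceProb A D m w =
      ∏ t : Fin m, stepProb A D t (fun j => w (Fin.castLE t.isLt.le j)) (w t) := by
  unfold traceProb stepProb
  rw [Finset.prod_univ_sum, Fintype.piFinset_univ]
  refine Finset.sum_congr rfl fun z _ => ?_
  rw [Finset.prod_mul_distrib, Finset.prod_ite_zero]
  simp

lemma traceProb_snoc (A : (t : ℕ) → ((Fin n → Bool) × Bool) → (Fin t → 𝒲) → 𝒲)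
    (D : (Fin n → Bool) × Bool → ℝ) (m : ℕ) (w : Fin m → 𝒲) (v : 𝒲) :
    traceProb A D (m + 1) (Fin.snoc w v : Fin (m + 1) → 𝒲) =
      traceProb A D m w * stepProb A D m w v := by
  have key : ∀ (t : ℕ) (ht : t ≤ m) (j : Fin t),
      (Fin.snoc w v : Fin (m + 1) → 𝒲) (Fin.castLE (ht.trans (Nat.le_succ m)) j) =
        w (Fin.castLE ht j) := by
    intro t ht j
    exact Fin.snoc_castSucc (α := fun _ => 𝒲) v w (Fin.castLE ht j)
  rw [traceProb_eq_prod, traceProb_eq_prod, Fin.prod_univ_castSucc]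
  congr 1
  · refine Finset.prod_congr rfl fun t _ => ?_
    rw [Fin.snoc_castSucc]
    congr 1
    funext j
    exact key t t.isLt.le j
  · rw [Fin.snoc_last]
    congr 1
    funext j
    exact key m le_rfl j

lemma sum_snoc (m : ℕ) (G : (Fin (m + 1) → 𝒲) → ℝ) :
    ∑ w, G w = ∑ w : Fin m → 𝒲, ∑ v, G (Fin.snoc w v : Fin (m + 1) → 𝒲) := by
  rw [Finset.sum_comm, ← Fintype.sum_prod_type']
  exact (Fintype.sum_equiv (Fin.snocEquiv (fun _ : Fin (m + 1) => 𝒲)) _ _ fun _ => rfl).symm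

lemma traceProb_nonneg (A : (t : ℕ) → ((Fin n → Bool) × Bool) → (Fin t → 𝒲) → 𝒲)
    (D : (Fin n → Bool) × Bool → ℝ) (hD : ∀ z, 0 ≤ D z) (m : ℕ) (w : Fin m → 𝒲) :
    0 ≤ traceProb A D m w := by
  rw [traceProb_eq_prod]
  exact Finset.prod_nonneg fun t _ => stepProb_nonneg A D hD _ _ _

lemma sum_traceProb (A : (t : ℕ) → ((Fin n → Bool) × Bool) → (Fin t → 𝒲) → 𝒲)
    (D : (Fin n → Bool) × Bool → ℝ) (hD1 : ∑ z, D z = 1) (m : ℕ) :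
    ∑ w, traceProb A D m w = 1 := by
  induction m with
  | zero => simp [traceProb_eq_prod]
  | succ m ih =>
    rw [sum_snoc]
    simp_rw [traceProb_snoc, ← Finset.mul_sum, sum_stepProb, hD1, mul_one, ih]

/-- The hybrid argument: `D` is a fixed sample law, `R i` a random one with weights `p i`, and
`ε` bounds the mean one-step discrepancy for each single output value. -/
lemma trace_bound {ι : Type*} [Fintype ι] (p : ι → ℝ) (hp : ∀ i, 0 ≤ p i)
    (A : (t : ℕ) → ((Fin n → Bool) × Bool) → (Fin t → 𝒲) → 𝒲)
    (D : (Fin n → Bool) × Bool → ℝ) (hD : ∀ z, 0 ≤ D z) (hD1 : ∑ z, D z = 1)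
    (R : ι → (Fin n → Bool) × Bool → ℝ) (hR : ∀ i z, 0 ≤ R i z) (hR1 : ∀ i, ∑ z, R i z = 1)
    (ε : ℝ)
    (hε : ∀ t w v, ∑ i, p i * |stepProb A D t w v - stepProb A (R i) t w v| ≤ ε) (m : ℕ) :
    ∑ i, p i * ∑ w, |traceProb A D m w - traceProb A (R i) m w| ≤
      m * (Fintype.card 𝒲 * ε) := by
  induction m with
  | zero => simp [traceProb_eq_prod]
  | succ m ih =>
    have hstep : ∀ i, ∑ w, |traceProb A D (m + 1) w - traceProb A (R i) (m + 1) w| ≤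
        (∑ w, ∑ v, traceProb A D m w * |stepProb A D m w v - stepProb A (R i) m w v|) +
          ∑ w, |traceProb A D m w - traceProb A (R i) m w| := by
      intro i
      rw [sum_snoc, ← Finset.sum_add_distrib]
      refine Finset.sum_le_sum fun w _ => ?_
      have hlast : |traceProb A D m w - traceProb A (R i) m w| =
          ∑ v, |traceProb A D m w - traceProb A (R i) m w| * stepProb A (R i) m w v := by
        rw [← Finset.mul_sum, sum_stepProb, hR1, mul_one]
      rw [hlast, ← Finset.sum_add_distrib]
      refine Finset.sum_le_sum fun v _ => ?_
      rw [traceProb_snoc, traceProb_snoc]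
      have h1 := abs_of_nonneg (traceProb_nonneg A D hD m w)
      have h2 := abs_of_nonneg (stepProb_nonneg A (R i) (hR i) m w v)
      calc _ = |traceProb A D m w * (stepProb A D m w v - stepProb A (R i) m w v) +
              (traceProb A D m w - traceProb A (R i) m w) * stepProb A (R i) m w v| := by
            congr 1; ring
        _ ≤ _ := abs_add_le _ _
        _ = _ := by rw [abs_mul, abs_mul, h1, h2]
    have hmain : ∑ i, p i * ∑ w, ∑ v,
        traceProb A D m w * |stepProb A D m w v - stepProb A (R i) m w v| ≤
          Fintype.card 𝒲 * ε := by
      calc _ = ∑ w, traceProb A D m w * ∑ v, ∑ i,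
              p i * |stepProb A D m w v - stepProb A (R i) m w v| := by
            simp_rw [Finset.mul_sum]
            rw [Finset.sum_comm]
            refine Finset.sum_congr rfl fun w _ => ?_
            rw [Finset.sum_comm]
            refine Finset.sum_congr rfl fun v _ => Finset.sum_congr rfl fun i _ => ?_
            ring
        _ ≤ ∑ w, traceProb A D m w * (Fintype.card 𝒲 * ε) := by
            refine Finset.sum_le_sum fun w _ =>
              mul_le_mul_of_nonneg_left ?_ (traceProb_nonneg A D hD m w)
            refine (Finset.sum_le_sum fun v _ => hε m w v).trans (le_of_eq ?_)
            simp
        _ = _ := by rw [← Finset.sum_mul, sum_traceProb A D hD1, one_mul]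
    calc _ ≤ ∑ i, (p i * (∑ w, ∑ v,
              traceProb A D m w * |stepProb A D m w v - stepProb A (R i) m w v|) +
            p i * ∑ w, |traceProb A D m w - traceProb A (R i) m w|) := by
          refine Finset.sum_le_sum fun i _ => ?_
          rw [← mul_add]
          exact mul_le_mul_of_nonneg_left (hstep i) (hp i)
      _ ≤ _ := by
          rw [Finset.sum_add_distrib]
          push_cast
          linarith

/-- One step under `ρ_f` depends on `f` only through a correlation of `χ_f`. -/
lemma stepProb_rho (A : (t : ℕ) → ((Fin n → Bool) × Bool) → (Fin t → 𝒲) → 𝒲)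
    (c : ℝ) (f : (Fin n → Bool) → Bool) (t : ℕ) (w : Fin t → 𝒲) (v : 𝒲) :
    stepProb A (fun z => c * (if f z.1 = z.2 then (1 : ℝ) else 0)) t w v =
      (∑ x, c * (((if A t (x, false) w = v then (1 : ℝ) else 0) +
        (if A t (x, true) w = v then (1 : ℝ) else 0)) / 2)) +
      (1 / 2) * ∑ x, c * (chi f x * ((if A t (x, false) w = v then (1 : ℝ) else 0) -
        (if A t (x, true) w = v then (1 : ℝ) else 0))) := by
  unfold stepProb
  rw [Fintype.sum_prod_type, Finset.mul_sum, ← Finset.sum_add_distrib]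
  refine Finset.sum_congr rfl fun x _ => ?_
  rw [Fintype.sum_bool]
  unfold chi
  cases h : f x
  · simp only [h, reduceCtorEq, if_true, if_false]
    ring
  · simp only [h, reduceCtorEq, if_true, if_false]
    ring

lemma step_bound (A : (t : ℕ) → ((Fin n → Bool) × Bool) → (Fin t → 𝒲) → 𝒲)
    (PF : ((Fin n → Bool) → Bool) → ℝ) (hP : ∀ f, 0 ≤ PF f) (hP1 : ∑ f, PF f = 1)
    (t : ℕ) (w : Fin t → 𝒲) (v : 𝒲) :
    (∑ f, PF f * |stepProb A (fun z => ∑ f : (Fin n → Bool) → Bool,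
          PF f * (((2 : ℝ) ^ n)⁻¹ * (if f z.1 = z.2 then (1 : ℝ) else 0))) t w v -
        stepProb A (fun z => ((2 : ℝ) ^ n)⁻¹ * (if f z.1 = z.2 then (1 : ℝ) else 0)) t w v|) ^ 4
      ≤ crossPred (fun _ : Fin n → Bool => ((2 : ℝ) ^ n)⁻¹) PF := by
  have hstar : stepProb A (fun z => ∑ f : (Fin n → Bool) → Bool,
      PF f * (((2 : ℝ) ^ n)⁻¹ * (if f z.1 = z.2 then (1 : ℝ) else 0))) t w v =
      ∑ f, PF f * stepProb A
        (fun z => ((2 : ℝ) ^ n)⁻¹ * (if f z.1 = z.2 then (1 : ℝ) else 0)) t w v := by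
    unfold stepProb
    simp_rw [Finset.sum_mul, Finset.mul_sum]
    rw [Finset.sum_comm]
    simp_rw [mul_assoc]
  rw [hstar]
  have h1 := mean_dev_le PF (fun f => stepProb A
    (fun z => ((2 : ℝ) ^ n)⁻¹ * (if f z.1 = z.2 then (1 : ℝ) else 0)) t w v) hP hP1
    (∑ x, ((2 : ℝ) ^ n)⁻¹ * (((if A t (x, false) w = v then (1 : ℝ) else 0) +
        (if A t (x, true) w = v then (1 : ℝ) else 0)) / 2))
  have h2 := corr_pow_four_le (fun _ : Fin n → Bool => ((2 : ℝ) ^ n)⁻¹)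
    (fun _ => by positivity) (by simp) PF hP hP1
    (fun x => (if A t (x, false) w = v then (1 : ℝ) else 0) -
        (if A t (x, true) w = v then (1 : ℝ) else 0))
    (fun x => by split_ifs <;> norm_num)
  refine le_trans (pow_le_pow_left₀ (Finset.sum_nonneg fun f _ =>
    mul_nonneg (hP f) (abs_nonneg _)) (h1.trans (le_of_eq ?_)) 4) h2
  rw [Finset.mul_sum]
  refine Finset.sum_congr rfl fun f _ => ?_
  rw [stepProb_rho, add_sub_cancel_left, abs_mul, abs_of_pos (by norm_num : (0 : ℝ) < 1 / 2)]
  ring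

end Trace

theorem stmt5 :
    ∃ C : ℝ, 0 < C ∧
      ∀ (n : ℕ), 0 < n →
      ∀ (𝒲 : Type) [Fintype 𝒲] [DecidableEq 𝒲],
      ∀ (A : (t : ℕ) → ((Fin n → Bool) × Bool) → (Fin t → 𝒲) → 𝒲),
      ∀ (PF : ((Fin n → Bool) → Bool) → ℝ),
        (∀ f, 0 ≤ PF f) → (∑ f : (Fin n → Bool) → Bool, PF f = 1) →
      ∀ (m : ℕ), 0 < m →
      -- |𝒲| ≤ 1/q
      ((Fintype.card 𝒲 : ℝ) ≤
        1 / (crossPred (fun _ : Fin n → Bool => ((2 : ℝ) ^ n)⁻¹) PF) ^ ((1 : ℝ) / 24)) →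
      -- m < 1/q
      ((m : ℝ) <
        1 / (crossPred (fun _ : Fin n → Bool => ((2 : ℝ) ^ n)⁻¹) PF) ^ ((1 : ℝ) / 24)) →
      -- Σ_{w^m} |P[W^m(⋆)=w^m] − E_F P[W^m(ρ_F)=w^m]| ≤ C·q
      ∑ w : Fin m → 𝒲,
          |traceProb A
              (fun z => ∑ f : (Fin n → Bool) → Bool,
                PF f * (((2 : ℝ) ^ n)⁻¹ * (if f z.1 = z.2 then (1 : ℝ) else 0))) m w -
            ∑ f : (Fin n → Bool) → Bool,
              PF f * traceProb A
                (fun z => ((2 : ℝ) ^ n)⁻¹ * (if f z.1 = z.2 then (1 : ℝ) else 0)) m w| ≤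
        C * (crossPred (fun _ : Fin n → Bool => ((2 : ℝ) ^ n)⁻¹) PF) ^ ((1 : ℝ) / 24) := by
  refine ⟨1, one_pos, ?_⟩
  intro n _ 𝒲 _ _ A PF hP hP1 m hm hW hmq
  have hp0 : 0 ≤ crossPred (fun _ : Fin n → Bool => ((2 : ℝ) ^ n)⁻¹) PF :=
    Finset.sum_nonneg fun f _ => Finset.sum_nonneg fun f' _ =>
      mul_nonneg (mul_nonneg (hP f) (hP f')) (sq_nonneg _)
  set q := (crossPred (fun _ : Fin n → Bool => ((2 : ℝ) ^ n)⁻¹) PF) ^ ((1 : ℝ) / 24) with hq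
  have hq0 : 0 ≤ q := Real.rpow_nonneg hp0 _
  have hm1 : (1 : ℝ) ≤ m := by exact_mod_cast hm
  -- At `q = 0` the hypothesis reads `m < 1 / 0 = 0`, which is impossible.
  have hqpos : 0 < q := by
    rcases hq0.eq_or_lt with h | h
    · rw [← h] at hmq
      simp only [div_zero] at hmq
      linarith
    · exact h
  have hmq' : (m : ℝ) * q ≤ 1 := ((lt_div_iff₀ hqpos).1 hmq).le
  have hWq : (Fintype.card 𝒲 : ℝ) * q ≤ 1 := (le_div_iff₀ hqpos).1 hW
  have hq1 : q ≤ 1 := by nlinarith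
  have hq24 : (q ^ 6) ^ 4 = crossPred (fun _ : Fin n → Bool => ((2 : ℝ) ^ n)⁻¹) PF := by
    rw [← pow_mul, hq, ← Real.rpow_natCast, ← Real.rpow_mul hp0]
    norm_num
  have hR1 : ∀ f : (Fin n → Bool) → Bool,
      ∑ z : (Fin n → Bool) × Bool, ((2 : ℝ) ^ n)⁻¹ * (if f z.1 = z.2 then (1 : ℝ) else 0) = 1 := by
    intro f
    rw [Fintype.sum_prod_type]
    simp
  have hR : ∀ (f : (Fin n → Bool) → Bool) (z : (Fin n → Bool) × Bool),
      0 ≤ ((2 : ℝ) ^ n)⁻¹ * (if f z.1 = z.2 then (1 : ℝ) else 0) :=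
    fun f z => mul_nonneg (by positivity) (by split_ifs <;> norm_num)
  have hb := trace_bound PF hP A
    (fun z => ∑ f : (Fin n → Bool) → Bool,
      PF f * (((2 : ℝ) ^ n)⁻¹ * (if f z.1 = z.2 then (1 : ℝ) else 0)))
    (fun z => Finset.sum_nonneg fun f _ => mul_nonneg (hP f) (hR f z))
    (by
      rw [Finset.sum_comm]
      refine Eq.trans (Finset.sum_congr rfl fun f _ => ?_) hP1
      rw [← Finset.mul_sum, hR1 f, mul_one])
    (fun f z => ((2 : ℝ) ^ n)⁻¹ * (if f z.1 = z.2 then (1 : ℝ) else 0)) hR hR1 (q ^ 6)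
    (fun t w v => le_of_pow_le_pow_left₀ (by norm_num : (4 : ℕ) ≠ 0) (by positivity)
      ((step_bound A PF hP hP1 t w v).trans hq24.ge)) m
  calc _ ≤ _ := ?_
    _ ≤ _ := hb
    _ = ((m : ℝ) * q) * (Fintype.card 𝒲 * q) * q ^ 4 := by ring
    _ ≤ 1 * q ^ 4 := by
        refine mul_le_mul_of_nonneg_right ?_ (by positivity)
        exact mul_le_one₀ hmq' (by positivity) hWq
    _ ≤ 1 * q := by
        rw [one_mul, one_mul]
        exact pow_le_of_le_one hq0 hq1 (by norm_num)
  -- Triangle inequality: the average over `f` is moved outside the absolute value.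
  simp_rw [Finset.mul_sum]
  rw [Finset.sum_comm]
  refine Finset.sum_le_sum fun w _ => ?_
  exact abs_sub_mean_le PF _ hP hP1 _
end

section
/- Let 𝒳 be a finite set, P_X a probability distribution on 𝒳, and P_F a probability distribution on the set of functions from 𝒳 to {0,1}. Let P_Z = P_X × Unif({0,1}) on 𝒵 = 𝒳 × {0,1}, and let g : 𝒵 → ℝ. For a function F : 𝒳 → {0,1}, define h_F : 𝒵 → {−1,1} by h_F(x,y) = 1 if F(x) ≠ y and h_F(x,y) = −1 if F(x) = y. Then E_{F~P_F}[ (E_{Z~P_Z}[g(Z) h_F(Z)])² ] ≤ (E_{Z~P_Z}[g²(Z)]) · √(Pred(P_X, P_F)). -/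
/-!
Write `c F = E_Z[g h_F]`, `S = E_F[c F ^ 2]`, `G = E_Z[g ^ 2]` and `K F F' = E_Z[h_F h_F']`.
Exchanging the expectations gives `S = E_Z[g u]` with `u = E_F[c F • h_F]`, so the Cauchy–Schwarz
inequality over `Z` yields `S ^ 2 ≤ G * T`, where `T = E_Z[u ^ 2] = E_{F,F'}[c F * c F' * K F F']`.
The Cauchy–Schwarz inequality over pairs `(F, F')` yields `T ^ 2 ≤ S ^ 2 * E_{F,F'}[K F F' ^ 2]`.
Together these give `S ≤ G * √(E_{F,F'}[K F F' ^ 2])`. This holds for any family `h_F`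
(`sum_sq_corr_le`); for the family of the theorem, averaging over the uniform bit `y` gives
`K F F' = E_X[(-1)^(F(X) + F'(X))]`, so the quantity under the root is the cross-predictability.
-/

open Finset

lemma weighted_cauchy_schwarz {ι : Type*} [Fintype ι] (w a b : ι → ℝ) (hw : ∀ i, 0 ≤ w i) :
    (∑ i, w i * (a i * b i)) ^ 2 ≤ (∑ i, w i * a i ^ 2) * ∑ i, w i * b i ^ 2 :=
  Finset.sum_sq_le_sum_mul_sum_of_sq_le_mul _
    (fun i _ => mul_nonneg (hw i) (sq_nonneg _))
    (fun i _ => mul_nonneg (hw i) (sq_nonneg _)) (fun i _ => le_of_eq (by ring))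

/-- The mean squared correlation of `g` with a random member of a family `h` is controlled by the
second moment of the pairwise correlations within the family. -/
lemma sum_sq_corr_le {ι α : Type*} [Fintype ι] [Fintype α] (w : ι → ℝ) (hw : ∀ i, 0 ≤ w i)
    (q : α → ℝ) (hq : ∀ a, 0 ≤ q a) (g : ι → ℝ) (h : α → ι → ℝ) :
    ∑ a, q a * (∑ i, w i * (g i * h a i)) ^ 2 ≤
      (∑ i, w i * g i ^ 2) *
        Real.sqrt (∑ a, ∑ b, q a * q b * (∑ i, w i * (h a i * h b i)) ^ 2) := by
  set c : α → ℝ := fun a => ∑ i, w i * (g i * h a i) with hc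
  set K : α → α → ℝ := fun a b => ∑ i, w i * (h a i * h b i) with hK
  set u : ι → ℝ := fun i => ∑ a, q a * (c a * h a i) with hu
  set G := ∑ i, w i * g i ^ 2 with hG
  set P := ∑ a, ∑ b, q a * q b * K a b ^ 2 with hP
  change ∑ a, q a * c a ^ 2 ≤ G * Real.sqrt P
  set S := ∑ a, q a * c a ^ 2 with hS
  set T := ∑ i, w i * u i ^ 2 with hT
  have hG0 : 0 ≤ G := Finset.sum_nonneg fun i _ => mul_nonneg (hw i) (sq_nonneg _)
  have hS0 : 0 ≤ S := Finset.sum_nonneg fun a _ => mul_nonneg (hq a) (sq_nonneg _)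
  have hP0 : 0 ≤ P := Finset.sum_nonneg fun a _ => Finset.sum_nonneg fun b _ =>
    mul_nonneg (mul_nonneg (hq a) (hq b)) (sq_nonneg _)
  have hSu : S = ∑ i, w i * (g i * u i) := by
    calc S = ∑ a, ∑ i, q a * c a * (w i * (g i * h a i)) := by
          refine Finset.sum_congr rfl fun a _ => ?_
          rw [← Finset.mul_sum, sq, mul_assoc]
      _ = ∑ i, ∑ a, q a * c a * (w i * (g i * h a i)) := Finset.sum_comm
      _ = _ := by
          refine Finset.sum_congr rfl fun i _ => ?_
          rw [hu, Finset.mul_sum, Finset.mul_sum]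
          exact Finset.sum_congr rfl fun a _ => by ring
  have hST : S ^ 2 ≤ G * T := hSu ▸ weighted_cauchy_schwarz w g u hw
  have hTK : T = ∑ p : α × α, q p.1 * q p.2 * (c p.1 * c p.2 * K p.1 p.2) := by
    calc T = ∑ i, ∑ p : α × α,
          w i * (q p.1 * (c p.1 * h p.1 i) * (q p.2 * (c p.2 * h p.2 i))) := by
          refine Finset.sum_congr rfl fun i _ => ?_
          rw [← Finset.mul_sum, Fintype.sum_prod_type, sq, hu, Finset.sum_mul_sum]
      _ = _ := by
          rw [Finset.sum_comm]
          refine Finset.sum_congr rfl fun p _ => ?_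
          rw [hK, Finset.mul_sum, Finset.mul_sum]
          exact Finset.sum_congr rfl fun i _ => by ring
  have hTP : T ^ 2 ≤ S ^ 2 * P := by
    have hcs := weighted_cauchy_schwarz (fun p : α × α => q p.1 * q p.2)
      (fun p => c p.1 * c p.2) (fun p => K p.1 p.2) fun p => mul_nonneg (hq _) (hq _)
    have hSS : ∑ p : α × α, q p.1 * q p.2 * (c p.1 * c p.2) ^ 2 = S ^ 2 := by
      rw [sq S, hS, Finset.sum_mul_sum, Fintype.sum_prod_type]
      exact Finset.sum_congr rfl fun a _ => Finset.sum_congr rfl fun b _ => by ring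
    have hPP : ∑ p : α × α, q p.1 * q p.2 * K p.1 p.2 ^ 2 = P := by
      rw [Fintype.sum_prod_type]
    rw [hTK]
    rwa [hSS, hPP] at hcs
  have hT_le : T ≤ S * Real.sqrt P := by
    refine (Real.le_sqrt_of_sq_le hTP).trans_eq ?_
    rw [Real.sqrt_mul (sq_nonneg S), Real.sqrt_sq hS0]
  rcases hS0.eq_or_lt with h0 | hpos
  · rw [← h0]
    exact mul_nonneg hG0 (Real.sqrt_nonneg P)
  · refine le_of_mul_le_mul_left ?_ hpos
    calc S * S = S ^ 2 := (sq S).symm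
      _ ≤ G * T := hST
      _ ≤ G * (S * Real.sqrt P) := mul_le_mul_of_nonneg_left hT_le hG0
      _ = S * (G * Real.sqrt P) := by ring

theorem stmt11 {𝒳 : Type*} [Fintype 𝒳] [DecidableEq 𝒳]
    (PX : 𝒳 → ℝ) (hPX0 : ∀ x, 0 ≤ PX x) (hPX1 : ∑ x : 𝒳, PX x = 1)
    (PF : (𝒳 → Bool) → ℝ) (hPF0 : ∀ f, 0 ≤ PF f) (hPF1 : ∑ f : 𝒳 → Bool, PF f = 1)
    (g : 𝒳 × Bool → ℝ) :
    -- E_F[(E_Z[g(Z) h_F(Z)])²] ≤ E_Z[g²(Z)] · √(Pred(P_X,P_F)), P_Z = P_X × Unif({0,1})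
    ∑ F : 𝒳 → Bool, PF F *
        (∑ x : 𝒳, ∑ y : Bool,
          (PX x * (1 / 2)) * (g (x, y) * (if F x ≠ y then (1 : ℝ) else -1))) ^ 2 ≤
      (∑ x : 𝒳, ∑ y : Bool, (PX x * (1 / 2)) * (g (x, y)) ^ 2) *
        Real.sqrt (crossPred PX PF) := by
  have key := sum_sq_corr_le (fun z : 𝒳 × Bool => PX z.1 * (1 / 2))
    (fun z => mul_nonneg (hPX0 z.1) (by norm_num)) PF hPF0 g
    (fun F z => if F z.1 ≠ z.2 then (1 : ℝ) else -1)
  simp only [Fintype.sum_prod_type] at key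
  have hpred : ∑ F : 𝒳 → Bool, ∑ F' : 𝒳 → Bool, PF F * PF F' *
      (∑ x : 𝒳, ∑ y : Bool, PX x * (1 / 2) *
        ((if F x ≠ y then (1 : ℝ) else -1) * (if F' x ≠ y then (1 : ℝ) else -1))) ^ 2 =
      crossPred PX PF := by
    refine Finset.sum_congr rfl fun F _ => Finset.sum_congr rfl fun F' _ => ?_
    congr 2
    refine Finset.sum_congr rfl fun x _ => ?_
    rw [Fintype.sum_bool]
    cases F x <;> cases F' x <;> simp <;> ring
  rwa [hpred] at key
end
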